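/- Let k ≥ 1, N ≥ 1 and m = 2^{k-1}·N. For each y ∈ {0,1}^k let p(·|y) be an arbitrary strictly positive product distribution in E_N. Partition the hidden state h ∈ {0,1}^m into 2^{k-1} consecutive blocks h^0, …, h^{2^{k-1}−1} of length N each. Then the Markov kernel P ∈ Δ_{k,m} given by P(h|y) = p(h^{⌊int(y)/2⌋}|y) · ∏_{i ≠ ⌊int(y)/2⌋} δ_0(h^i) (i.e., block number ⌊int(y)/2⌋ is distributed according to p(·|y) and all other blocks are all-zero with probability one) lies in the closure of F_{k,m}. -/

import Mathlib

open Finset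

/-- The logistic sigmoid function `σ(a) = 1/(1+exp(-a))`. -/
noncomputable def sigmoid (a : ℝ) : ℝ := 1 / (1 + Real.exp (-a))

/-- Real value of a bit. -/
def bval (b : Bool) : ℝ := if b then 1 else 0

/-- The set `F_{k,m}` of Markov kernels representable by a feedforward layer of `m`
sigmoid stochastic units with `k` binary inputs. -/
noncomputable def Fset (k m : ℕ) : Set ((Fin k → Bool) → (Fin m → Bool) → ℝ) :=
  {P | ∃ (V : Fin m → Fin k → ℝ) (c : Fin m → ℝ), ∀ y z,
    P y z = ∏ j, (if z j then sigmoid ((∑ i, V j i * bval (y i)) + c j)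
                  else 1 - sigmoid ((∑ i, V j i * bval (y i)) + c j))}

/-- `Δ_{k,n}`: all Markov kernels from `{0,1}^k` to distributions on `{0,1}^n`. -/
def markovKernels (k n : ℕ) : Set ((Fin k → Bool) → (Fin n → Bool) → ℝ) :=
  {P | (∀ y x, 0 ≤ P y x) ∧ ∀ y, ∑ x, P y x = 1}

/-- Composition of Markov kernels: `(R ∘ Q)(x|y) = ∑_z Q(z|y) R(x|z)`. -/
noncomputable def kcomp {k m n : ℕ} (R : (Fin m → Bool) → (Fin n → Bool) → ℝ)
    (Q : (Fin k → Bool) → (Fin m → Bool) → ℝ) : (Fin k → Bool) → (Fin n → Bool) → ℝ :=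
  fun y x => ∑ z, Q y z * R z x

/-- `Δ_n`: probability distributions on `{0,1}^n`. -/
def simplex (n : ℕ) : Set ((Fin n → Bool) → ℝ) :=
  {p | (∀ x, 0 ≤ p x) ∧ ∑ x, p x = 1}

/-- `Δ_n^+`: strictly positive probability distributions on `{0,1}^n`. -/
def simplexPos (n : ℕ) : Set ((Fin n → Bool) → ℝ) :=
  {p | (∀ x, 0 < p x) ∧ ∑ x, p x = 1}

/-- Mixture `p^⊤ R` of the rows of a kernel `R` with weights `p`. -/
noncomputable def mix {m n : ℕ} (p : (Fin m → Bool) → ℝ)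
    (R : (Fin m → Bool) → (Fin n → Bool) → ℝ) : (Fin n → Bool) → ℝ :=
  fun x => ∑ z, p z * R z x

/-- `E_m`: strictly positive product distributions on `{0,1}^m`, where the `j`-th bit
is `0` with probability `q j ∈ (0,1)`. -/
def Eset (m : ℕ) : Set ((Fin m → Bool) → ℝ) :=
  {p | ∃ q : Fin m → ℝ, (∀ j, q j ∈ Set.Ioo (0:ℝ) 1) ∧
    ∀ z, p z = ∏ j, (if z j then 1 - q j else q j)}

/-- Integer value of a binary vector (bit `i` has weight `2^i`). -/
def intval {k : ℕ} (y : Fin k → Bool) : ℕ := ∑ i, if y i then 2 ^ (i : ℕ) else 0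

/-- `l(z)`: position (1-based) of the largest nonzero entry of `z`, and `0` if `z = 0`. -/
def lidx {N : ℕ} (z : Fin N → Bool) : ℕ :=
  (Finset.univ.filter (fun j => z j = true)).sup (fun j => (j : ℕ) + 1)

/-- `bin_n(l)`: the `n`-bit binary representation of `l`. -/
def binVec (n l : ℕ) : Fin n → Bool := fun i => Nat.testBit l (i : ℕ)

/-- Point measure at `x ∈ {0,1}^n`. -/
noncomputable def deltaAt {n : ℕ} (x : Fin n → Bool) : (Fin n → Bool) → ℝ :=
  fun x' => if x' = x then 1 else 0

/-- Index of the `j`-th unit of the `i`-th block, for `B` consecutive blocks of `N` units. -/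
def blk (B N : ℕ) (i : Fin B) (j : Fin N) : Fin (B * N) :=
  ⟨(i : ℕ) * N + (j : ℕ), by
    calc (i : ℕ) * N + (j : ℕ) < (i : ℕ) * N + N := Nat.add_lt_add_left j.isLt _
      _ = ((i : ℕ) + 1) * N := by ring
      _ ≤ B * N := Nat.mul_le_mul_right N i.isLt⟩

/-!
Up to limits, the units of a layer can be tuned independently: a layer kernel depends continuously
on the response functions `y ↦ P(z_j = 1 | y)` of its units. So it suffices to show that a single
unit can approximate any response that is prescribed on the edge `{y | ⌊int(y)/2⌋ = i}` of the cube
and vanishes off it. The two prescribed values on the edge are interpolated by an affine function of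
the free bit, and subtracting from it `t` times the number of fixed bits of `y` that leave the edge,
which is again affine in `y`, switches the unit off elsewhere as `t → ∞`.
-/

open Filter Topology

theorem sigmoid_eq_real_sigmoid : sigmoid = Real.sigmoid :=
  funext fun a => one_div (1 + Real.exp (-a))

theorem exists_sigmoid_eq {x : ℝ} (hx : x ∈ Set.Ioo 0 1) : ∃ a, sigmoid a = x := by
  rwa [← Set.mem_range, sigmoid_eq_real_sigmoid, Real.range_sigmoid]

theorem tendsto_sigmoid_atBot : Tendsto sigmoid atBot (𝓝 0) :=
  sigmoid_eq_real_sigmoid ▸ Real.tendsto_sigmoid_atBot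

theorem blk_eq_finProdFinEquiv (B N : ℕ) (i : Fin B) (j : Fin N) :
    blk B N i j = finProdFinEquiv (i, j) :=
  Fin.ext (by simp [blk, mul_comm, add_comm])

theorem divNat_blk (B N : ℕ) (i : Fin B) (j : Fin N) : (blk B N i j).divNat = i := by
  rw [blk_eq_finProdFinEquiv]
  exact congrArg Prod.fst (finProdFinEquiv.symm_apply_apply (i, j))

theorem modNat_blk (B N : ℕ) (i : Fin B) (j : Fin N) : (blk B N i j).modNat = j := by
  rw [blk_eq_finProdFinEquiv]
  exact congrArg Prod.snd (finProdFinEquiv.symm_apply_apply (i, j))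

/-- The law of independent bits `z j`, where `z j = 1` with probability `r j`. In contrast, the
parameters in `Eset` are the probabilities of `0`. -/
def bernoulliProd {ι : Type*} [Fintype ι] (r : ι → ℝ) (z : ι → Bool) : ℝ :=
  ∏ j, if z j then r j else 1 - r j

section bernoulliProd

variable {ι : Type*} [Fintype ι]

theorem bernoulliProd_zero (z : ι → Bool) [Decidable (∀ j, z j = false)] :
    bernoulliProd 0 z = if ∀ j, z j = false then 1 else 0 := by
  calc bernoulliProd 0 z = ∏ j, if z j = false then (1 : ℝ) else 0 :=
        prod_congr rfl fun j _ => by cases z j <;> simp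
    _ = if ∀ j, z j = false then 1 else 0 := by
      rw [Fintype.prod_ite_zero, prod_const_one]
      congr

theorem continuous_bernoulliProd (z : ι → Bool) :
    Continuous fun r : ι → ℝ => bernoulliProd r z := by
  refine continuous_finsetProd _ fun j _ => ?_
  split_ifs <;> fun_prop

theorem exists_eq_bernoulliProd_of_mem_Eset {N : ℕ} {p : (Fin N → Bool) → ℝ} (hp : p ∈ Eset N) :
    ∃ r : Fin N → ℝ, (∀ j, r j ∈ Set.Ioo 0 1) ∧ p = bernoulliProd r := by
  obtain ⟨q, hq, hpq⟩ := hp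
  refine ⟨fun j => 1 - q j, fun j => Set.sub_mem_Ioo_iff_right.mpr ?_, funext fun z => ?_⟩
  · simpa using hq j
  · simp only [hpq, bernoulliProd, sub_sub_cancel]

theorem bernoulliProd_eq_prod_blk {B N : ℕ} (r : Fin (B * N) → ℝ) (z : Fin (B * N) → Bool) :
    bernoulliProd r z =
      ∏ i, bernoulliProd (fun j => r (blk B N i j)) (fun j => z (blk B N i j)) := by
  simp only [bernoulliProd, blk_eq_finProdFinEquiv]
  rw [← finProdFinEquiv.prod_comp, Fintype.prod_prod_type]

end bernoulliProd

/-- The affine functions `y ↦ v ⬝ y + c` on the cube `{0,1}^k`, i.e. the possible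
pre-activations of a unit with `k` binary inputs. -/
def affineFunctions (k : ℕ) : Submodule ℝ ((Fin k → Bool) → ℝ) where
  carrier := {f | ∃ (v : Fin k → ℝ) (c : ℝ), ∀ y, f y = (∑ i, v i * bval (y i)) + c}
  zero_mem' := ⟨0, 0, by simp⟩
  add_mem' := by
    rintro f g ⟨v, c, hf⟩ ⟨w, d, hg⟩
    refine ⟨v + w, c + d, fun y => ?_⟩
    simp only [Pi.add_apply, hf, hg, add_mul, sum_add_distrib]
    ring
  smul_mem' := by
    rintro a f ⟨v, c, hf⟩
    refine ⟨a • v, a * c, fun y => ?_⟩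
    simp only [Pi.smul_apply, smul_eq_mul, hf, mul_add, mul_sum, mul_assoc]

/-- The functions `y ↦ P(z_j = 1 | y)` realized by a single sigmoid unit with `k` binary inputs. -/
def unitResponses (k : ℕ) : Set ((Fin k → Bool) → ℝ) :=
  (fun f y => sigmoid (f y)) '' (affineFunctions k : Set ((Fin k → Bool) → ℝ))

/-- The kernel `P(z|y)` of a layer of conditionally independent bits, the `j`-th of which has
response function `r j`. -/
def layerKernel {k m : ℕ} (r : Fin m → (Fin k → Bool) → ℝ) :
    (Fin k → Bool) → (Fin m → Bool) → ℝ :=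
  fun y => bernoulliProd fun j => r j y

section layerKernel

variable {k m : ℕ}

theorem continuous_layerKernel :
    Continuous (layerKernel : (Fin m → (Fin k → Bool) → ℝ) → _) :=
  continuous_pi fun y => continuous_pi fun z => (continuous_bernoulliProd z).comp (by fun_prop)

theorem layerKernel_mem_Fset {r : Fin m → (Fin k → Bool) → ℝ}
    (hr : ∀ j, r j ∈ unitResponses k) : layerKernel r ∈ Fset k m := by
  choose f hf hfr using hr
  choose V c hVc using hf
  refine ⟨V, c, fun y z => ?_⟩
  simp only [layerKernel, bernoulliProd, ← hfr, hVc]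

theorem layerKernel_mem_closure_Fset {r : Fin m → (Fin k → Bool) → ℝ}
    (hr : ∀ j, r j ∈ closure (unitResponses k)) : layerKernel r ∈ closure (Fset k m) := by
  have hr_pi : r ∈ closure (Set.univ.pi fun _ : Fin m => unitResponses k) := by
    rw [closure_pi_set]
    exact fun j _ => hr j
  exact map_mem_closure continuous_layerKernel hr_pi fun s hs =>
    layerKernel_mem_Fset fun j => hs j (Set.mem_univ j)

end layerKernel

section unitResponses

variable {k : ℕ}

theorem comp_eval_mem_affineFunctions (i : Fin k) (a : Bool → ℝ) :
    (fun y => a (y i)) ∈ affineFunctions k := by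
  refine ⟨Pi.single i (a true - a false), a false, fun y => ?_⟩
  simp only [Pi.single_apply, ite_mul, zero_mul, sum_ite_eq', mem_univ, if_true]
  cases y i <;> simp [bval]

theorem card_filter_ne_mem_affineFunctions (S : Finset (Fin k)) (w : Fin k → Bool) :
    (fun y => (#{l ∈ S | y l ≠ w l} : ℝ)) ∈ affineFunctions k := by
  have hsum : (fun y : Fin k → Bool => (#{l ∈ S | y l ≠ w l} : ℝ)) =
      ∑ l ∈ S, fun y => if y l ≠ w l then (1 : ℝ) else 0 := by
    ext y
    rw [natCast_card_filter, Finset.sum_apply]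
  rw [hsum]
  exact sum_mem fun l _ => comp_eval_mem_affineFunctions l fun b => if b ≠ w l then 1 else 0

theorem ite_zeros_mem_closure_unitResponses {f g : (Fin k → Bool) → ℝ}
    (hf : f ∈ affineFunctions k) (hg : g ∈ affineFunctions k) (hg_nonneg : 0 ≤ g) :
    (fun y => if g y = 0 then sigmoid (f y) else 0) ∈ closure (unitResponses k) := by
  refine mem_closure_of_tendsto (b := atTop) (f := fun (t : ℝ) y => sigmoid ((f - t • g) y)) ?_
    (.of_forall fun t => ⟨_, sub_mem hf (Submodule.smul_mem _ t hg), rfl⟩)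
  refine tendsto_pi_nhds.mpr fun y => ?_
  simp only [Pi.sub_apply, Pi.smul_apply, smul_eq_mul]
  split_ifs with hgy
  · simp only [hgy, mul_zero, sub_zero]
    exact tendsto_const_nhds
  · have hgy_pos : 0 < g y := (hg_nonneg y).lt_of_ne' hgy
    have h_penalty : Tendsto (fun t => t * g y) atTop atTop := tendsto_id.atTop_mul_const hgy_pos
    exact tendsto_sigmoid_atBot.comp <|
      tendsto_const_nhds.add_atBot (tendsto_neg_atTop_atBot.comp h_penalty)

theorem ite_face_mem_closure_unitResponses {f : (Fin k → Bool) → ℝ}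
    (hf : f ∈ affineFunctions k) (S : Finset (Fin k)) (w : Fin k → Bool) :
    (fun y => if ∀ l ∈ S, y l = w l then sigmoid (f y) else 0) ∈ closure (unitResponses k) := by
  convert ite_zeros_mem_closure_unitResponses hf (card_filter_ne_mem_affineFunctions S w)
    (fun y => Nat.cast_nonneg _) using 4
  simp [filter_eq_empty_iff]

theorem ite_edge_mem_closure_unitResponses (i : Fin k) (w : Fin k → Bool)
    {r : (Fin k → Bool) → ℝ} (hr : ∀ y, r y ∈ Set.Ioo 0 1) :
    (fun y => if ∀ l ≠ i, y l = w l then r y else 0) ∈ closure (unitResponses k) := by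
  choose a ha using fun b => exists_sigmoid_eq (hr (Function.update w i b))
  convert ite_face_mem_closure_unitResponses (comp_eval_mem_affineFunctions i a) {i}ᶜ w
    using 2 with y
  simp only [mem_compl, mem_singleton]
  refine if_ctx_congr Iff.rfl (fun hy => ?_) fun _ => rfl
  rw [ha, ← Function.eq_update_iff.mpr ⟨rfl, hy⟩]

end unitResponses

theorem intval_eq_ofBits : ∀ {k : ℕ} (y : Fin k → Bool), intval y = Nat.ofBits y
  | 0, _ => rfl
  | k + 1, y => by
    rw [Nat.ofBits_succ, ← intval_eq_ofBits, intval, Fin.sum_univ_succ, intval, mul_sum, add_comm]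
    congr 1
    · simp [pow_succ']
    · cases y 0 <;> rfl

theorem testBit_intval {k : ℕ} (y : Fin k → Bool) (l : Fin k) : (intval y).testBit l = y l := by
  rw [intval_eq_ofBits, Nat.testBit_ofBits_lt]

theorem intval_div_two_lt {k : ℕ} (hk : 0 < k) (y : Fin k → Bool) :
    intval y / 2 < 2 ^ (k - 1) := by
  rw [Nat.div_lt_iff_lt_mul two_pos, Nat.pow_pred_mul hk, intval_eq_ofBits]
  exact Nat.ofBits_lt_two_pow y

theorem eq_intval_div_two_iff {k : ℕ} (hk : 0 < k) (y : Fin k → Bool) {i : ℕ}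
    (hi : i < 2 ^ (k - 1)) :
    i = intval y / 2 ↔ ∀ l ≠ ⟨0, hk⟩, y l = binVec k (2 * i) l := by
  have testBit_double (n : ℕ) : (2 * i).testBit (n + 1) = i.testBit n := by
    rw [Nat.testBit_add_one, Nat.mul_div_cancel_left i two_pos]
  constructor
  · rintro hiy ⟨_ | n, hn⟩ hl
    · exact absurd rfl hl
    · rw [binVec, testBit_double, hiy, Nat.testBit_div_two]
      exact (testBit_intval y ⟨n + 1, hn⟩).symm
  · refine fun hy => Nat.eq_of_testBit_eq fun n => ?_
    rcases lt_or_ge (n + 1) k with hn | hn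
    · have hyn := hy ⟨n + 1, hn⟩ (by simp)
      rw [Nat.testBit_div_two, ← testBit_double]
      exact hyn.symm.trans (testBit_intval y ⟨n + 1, hn⟩).symm
    · have hpow : 2 ^ (k - 1) ≤ 2 ^ n := Nat.pow_le_pow_right two_pos (by omega)
      rw [Nat.testBit_lt_two_pow (hi.trans_le hpow),
        Nat.testBit_lt_two_pow ((intval_div_two_lt hk y).trans_le hpow)]

/-- Proposition 4: with `m = 2^(k-1) N` hidden units split into `2^(k-1)` consecutive blocks
of `N` units, the kernel that, on input `y`, distributes block `⌊int(y)/2⌋` according to an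
arbitrary product distribution `p(·|y) ∈ E_N` and sets all other blocks to zero with
probability one, lies in the closure of `F_{k,m}`. -/
theorem block_activation_kernel_mem_closure
    (k N : ℕ) (hk : 1 ≤ k) (hN : 1 ≤ N)
    (p : (Fin k → Bool) → (Fin N → Bool) → ℝ) (hp : ∀ y, p y ∈ Eset N) :
    (fun (y : Fin k → Bool) (h : Fin (2 ^ (k - 1) * N) → Bool) =>
      ∏ i : Fin (2 ^ (k - 1)),
        if (i : ℕ) = intval y / 2 then p y (fun j => h (blk (2 ^ (k - 1)) N i j))
        else if ∀ j : Fin N, h (blk (2 ^ (k - 1)) N i j) = false then 1 else 0)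
      ∈ closure (Fset k (2 ^ (k - 1) * N)) := by
  choose r hr hpr using fun y => exists_eq_bernoulliProd_of_mem_Eset (hp y)
  have hunit (j : Fin (2 ^ (k - 1) * N)) :
      (fun y => if (j.divNat : ℕ) = intval y / 2 then r y j.modNat else 0) ∈
        closure (unitResponses k) := by
    simp only [eq_intval_div_two_iff hk _ j.divNat.isLt]
    exact ite_edge_mem_closure_unitResponses _ _ fun y => hr y j.modNat
  convert layerKernel_mem_closure_Fset hunit using 3 with y h
  rw [layerKernel, bernoulliProd_eq_prod_blk]
  refine prod_congr rfl fun i _ => ?_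
  simp only [divNat_blk, modNat_blk]
  by_cases hi : (i : ℕ) = intval y / 2
  · simp only [hi, if_true, hpr]
  · simp only [hi, if_false]
    exact (bernoulliProd_zero fun j => h (blk _ N i j)).symm
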